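/- For every set X of n points in d-dimensional Euclidean space ℝ^d with minimum pairwise distance 1, every ε ∈ (0, 1/8), and every t with 2 ≤ t ≤ √(2d/ln d), there exists an O(t)-spanner for X with lightness O_ε(t·2^{O(d/t²)}·log² n) and with O_ε(n·2^{O(d/t²)}·log n·log t) edges, where O_ε hides factors polynomial in 1/ε. -/

import Mathlib

open MeasureTheory

noncomputable section

/-- The distance function on unordered pairs of points. -/
def symDist {X : Type*} [MetricSpace X] : Sym2 X → ℝ :=
  Sym2.lift ⟨fun a b => dist a b, fun a b => dist_comm a b⟩

/-- The weight of a walk: the sum of the metric distances along its edges. -/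
def walkWeight {X : Type*} [MetricSpace X] {G : SimpleGraph X} {u v : X}
    (p : G.Walk u v) : ℝ :=
  (p.edges.map symDist).sum

/-- Shortest-path distance in a graph whose edges are weighted by the metric. -/
def spannerDist {X : Type*} [MetricSpace X] (G : SimpleGraph X) (u v : X) : ℝ :=
  sInf {c | ∃ p : G.Walk u v, walkWeight p = c}

/-- `G` is a `t`-spanner of the metric space `X`. -/
def IsSpanner {X : Type*} [MetricSpace X] (G : SimpleGraph X) (t : ℝ) : Prop :=
  ∀ u v : X, dist u v ≤ spannerDist G u v ∧ spannerDist G u v ≤ t * dist u v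

/-- Total weight of a graph over a finite metric space. -/
def graphWeight {X : Type*} [MetricSpace X] [Fintype X] (G : SimpleGraph X) : ℝ :=
  ∑ e ∈ G.edgeSet.toFinite.toFinset, symDist e

/-- Number of edges of a graph. -/
def edgeCount {X : Type*} (G : SimpleGraph X) : ℕ :=
  Nat.card G.edgeSet

/-- Weight of a minimum spanning tree of a finite metric space: the minimum total
weight of a connected graph on `X`. -/
def mstWeight (X : Type*) [MetricSpace X] [Fintype X] : ℝ :=
  sInf {c | ∃ G : SimpleGraph X, G.Connected ∧ graphWeight G = c}

/-- `D` is a `(t, Δ, δ)`-decomposition of the metric space `X`. -/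
def IsDecomposition {X : Type*} [MetricSpace X] (t Δ δ : ℝ) (D : PMF (Setoid X)) : Prop :=
  (∀ P ∈ D.support, ∀ x y : X, P.r x y → dist x y ≤ t * Δ) ∧
  (∀ x y : X, dist x y ≤ Δ → ENNReal.ofReal δ ≤ D.toOuterMeasure {P | P.r x y})

/-- A metric space `X` is `(t, δ)`-decomposable. -/
def IsDecomposable (X : Type*) [MetricSpace X] (t δ : ℝ) : Prop :=
  ∀ Δ : ℝ, 0 < Δ → ∃ D : PMF (Setoid X), IsDecomposition t Δ δ D

/-- `X` has doubling constant `lam`. -/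
def HasDoublingConstant (X : Type*) [MetricSpace X] (lam : ℕ) : Prop :=
  ∀ (x : X) (r : ℝ), 0 < r → ∃ F : Finset X, F.card ≤ lam ∧
    Metric.closedBall x (2 * r) ⊆ ⋃ y ∈ F, Metric.closedBall y r

/-- Weight of a walk in a weighted graph. -/
def wWalkWeight {V : Type*} {G : SimpleGraph V} (w : Sym2 V → ℝ) {u v : V}
    (p : G.Walk u v) : ℝ :=
  (p.edges.map w).sum

/-- Shortest-path distance in a weighted graph. -/
def wDist {V : Type*} (G : SimpleGraph V) (w : Sym2 V → ℝ) (u v : V) : ℝ :=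
  sInf {c | ∃ p : G.Walk u v, wWalkWeight w p = c}

/-- Total edge weight of a weighted graph. -/
def wGraphWeight {V : Type*} [Fintype V] (G : SimpleGraph V) (w : Sym2 V → ℝ) : ℝ :=
  ∑ e ∈ G.edgeSet.toFinite.toFinset, w e

/-- Weight of a minimum spanning tree of a weighted graph `G`: the least total weight
of a connected spanning subgraph of `G`. -/
def wMstWeight {V : Type*} [Fintype V] (G : SimpleGraph V) (w : Sym2 V → ℝ) : ℝ :=
  sInf {c | ∃ T : SimpleGraph V, T ≤ G ∧ T.Connected ∧ wGraphWeight T w = c}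

/-- The setoid of elements lying on the same cycle of a permutation. -/
def sameCycleSetoid {α : Type*} (σ : Equiv.Perm α) : Setoid α :=
  ⟨σ.SameCycle, ⟨fun x => Equiv.Perm.SameCycle.refl σ x,
    fun h => h.symm, fun h₁ h₂ => h₁.trans h₂⟩⟩

/-- The number of cycles (orbits) of a permutation. -/
def numCycles {α : Type*} (σ : Equiv.Perm α) : ℕ :=
  Nat.card (Quotient (sameCycleSetoid σ))

/-- The dart-reversal permutation of a graph. -/
def dartReversal {V : Type*} (G : SimpleGraph V) : Equiv.Perm G.Dart :=
  Function.Involutive.toPerm SimpleGraph.Dart.symm SimpleGraph.Dart.symm_involutive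

/-- `σ` is a rotation system of `G`: it permutes darts, preserves tails, and is a single
cycle on the darts emanating from each fixed vertex. -/
def IsRotationSystem {V : Type*} (G : SimpleGraph V) (σ : Equiv.Perm G.Dart) : Prop :=
  (∀ d : G.Dart, (σ d).toProd.1 = d.toProd.1) ∧
  (∀ d e : G.Dart, d.toProd.1 = e.toProd.1 → σ.SameCycle d e)

/-- `G` has (orientable) genus at most `g`: some rotation system, whose number of faces
is the number of cycles of the face permutation `σ * dartReversal G`, satisfies Euler's
formula `V - E + F ≥ 2 - 2g`. -/
def GenusLE {V : Type*} [Fintype V] (G : SimpleGraph V) (g : ℕ) : Prop :=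
  ∃ σ : Equiv.Perm G.Dart, IsRotationSystem G σ ∧
    (2 : ℤ) - 2 * (g : ℤ) ≤
      (Fintype.card V : ℤ) - (Nat.card G.edgeSet : ℤ) + (numCycles (σ * dartReversal G) : ℤ)

/-- `D` is a `(t, Δ, δ)`-strong-decomposition of the weighted graph `(G, w)`: clusters
have strong diameter at most `t·Δ`, and pairs at distance at most `Δ` are clustered
together with probability at least `δ`. -/
def IsStrongDecomposition {V : Type*} (G : SimpleGraph V) (w : Sym2 V → ℝ)
    (t Δ δ : ℝ) (D : PMF (Setoid V)) : Prop :=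
  (∀ P ∈ D.support, ∀ u v : V, P.r u v →
      ∃ p : G.Walk u v, (∀ z ∈ p.support, P.r u z) ∧ wWalkWeight w p ≤ t * Δ) ∧
  (∀ u v : V, wDist G w u v ≤ Δ → ENNReal.ofReal δ ≤ D.toOuterMeasure {P | P.r u v})

/-- A weighted graph is `(t, δ)`-strongly-decomposable. -/
def IsStronglyDecomposable {V : Type*} (G : SimpleGraph V) (w : Sym2 V → ℝ)
    (t δ : ℝ) : Prop :=
  ∀ Δ : ℝ, 0 < Δ → ∃ D : PMF (Setoid V), IsStrongDecomposition G w t Δ δ D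

/-- `D` is an `(r, cr, p₁, p₂)`-sensitive LSH family for `X`. -/
def IsLSHFamily {X : Type*} {U : Type*} [MetricSpace X] (D : PMF (X → U))
    (r cr p₁ p₂ : ℝ) : Prop :=
  (∀ x y : X, dist x y ≤ r → ENNReal.ofReal p₁ ≤ D.toOuterMeasure {h | h x = h y}) ∧
  (∀ x y : X, cr < dist x y → D.toOuterMeasure {h | h x = h y} ≤ ENNReal.ofReal p₂)

end

lemma symDist_nonneg' {X : Type*} [MetricSpace X] (e : Sym2 X) : 0 ≤ symDist e := by
  induction e with
  | _ a b => exact dist_nonneg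

lemma net_exists {X : Type*} [MetricSpace X] [DecidableEq X] (ρ : ℝ) (A : Finset X) :
    ∃ B : Finset X, B ⊆ A ∧ (∀ x ∈ B, ∀ y ∈ B, x ≠ y → ρ ≤ dist x y) ∧
      (∀ x ∈ A, ∃ y ∈ B, dist x y < ρ ∨ x = y) := by
  induction A using Finset.induction_on with
  | empty => exact ⟨∅, by simp, by simp, by simp⟩
  | insert a A ha ih =>
    obtain ⟨B, hBA, hsep, hcov⟩ := ih
    by_cases h : ∃ y ∈ B, dist a y < ρ
    · refine ⟨B, hBA.trans (Finset.subset_insert _ _), hsep, ?_⟩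
      intro x hx
      rcases Finset.mem_insert.1 hx with rfl | hx
      · obtain ⟨y, hy, hd⟩ := h
        exact ⟨y, hy, Or.inl hd⟩
      · exact hcov x hx
    · push Not at h
      refine ⟨insert a B, Finset.insert_subset_insert _ hBA, ?_, ?_⟩
      · intro x hx y hy hxy
        rcases Finset.mem_insert.1 hx with hxa | hx' <;> rcases Finset.mem_insert.1 hy with hya | hy'
        · exact absurd (hxa.trans hya.symm) hxy
        · rw [hxa]; exact h y hy'
        · rw [hya, dist_comm]; exact h x hx'
        · exact hsep x hx' y hy' hxy
      · intro x hx
        rcases Finset.mem_insert.1 hx with rfl | hx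
        · exact ⟨x, Finset.mem_insert_self _ _, Or.inr rfl⟩
        · obtain ⟨y, hy, hd⟩ := hcov x hx
          exact ⟨y, Finset.mem_insert_of_mem hy, hd⟩

lemma nets_exist {X : Type*} [MetricSpace X] [DecidableEq X] [Fintype X]
    (hX : ∀ x y : X, x ≠ y → 1 ≤ dist x y) :
    ∃ N : ℕ → Finset X, N 0 = Finset.univ ∧ (∀ i, N (i + 1) ⊆ N i) ∧
      (∀ i, ∀ x ∈ N i, ∀ y ∈ N i, x ≠ y → (2 : ℝ) ^ i ≤ dist x y) ∧
      (∀ i, ∀ x ∈ N i, ∃ y ∈ N (i + 1), dist x y ≤ 2 ^ (i + 1)) := by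
  choose f hf1 hf2 hf3 using fun (ρ : ℝ) (A : Finset X) => net_exists ρ A
  let N : ℕ → Finset X := fun i => Nat.rec Finset.univ (fun j A => f (2 ^ (j + 1)) A) i
  refine ⟨N, rfl, fun i => hf1 _ _, ?_, ?_⟩
  · intro i
    cases i with
    | zero => intro x _ y _ h; simpa using hX x y h
    | succ i => exact hf2 _ _
  · intro i x hx
    obtain ⟨y, hy, h⟩ := hf3 (2 ^ (i + 1)) (N i) x hx
    refine ⟨y, hy, ?_⟩
    rcases h with h | h
    · exact h.le
    · subst h; simp

lemma dist_le_walkWeight {X : Type*} [MetricSpace X] {G : SimpleGraph X} (f : X → ℝ)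
    (g : Sym2 X → ℝ) (hg : ∀ a b, |f a - f b| ≤ g s(a, b)) {u v : X} (p : G.Walk u v) :
    f u - f v ≤ (p.edges.map g).sum := by
  induction p with
  | nil => simp
  | cons h p ih =>
    rename_i a b c
    simp only [SimpleGraph.Walk.edges_cons, List.map_cons, List.sum_cons]
    have := hg a b
    have := le_abs_self (f a - f b)
    linarith

lemma conn_lower {X : Type*} [MetricSpace X] [Fintype X] {G : SimpleGraph X} (hG : G.Connected)
    (f : X → ℝ)
    (g : Sym2 X → ℝ) (hg : ∀ a b, |f a - f b| ≤ g s(a, b)) (u v : X) :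
    f u - f v ≤ ∑ e ∈ G.edgeSet.toFinite.toFinset, g e := by
  classical
  obtain ⟨p, hp⟩ := hG.exists_isPath u v
  refine (dist_le_walkWeight f g hg p).trans ?_
  rw [← List.sum_toFinset _ hp.isTrail.edges_nodup]
  apply Finset.sum_le_sum_of_subset_of_nonneg
  · intro e he
    simp only [List.mem_toFinset] at he
    simpa using p.edges_subset_edgeSet he
  · intro e _ _
    induction e with
    | _ a b => exact (abs_nonneg _).trans (hg a b)

lemma le_mst {X : Type*} [MetricSpace X] [Fintype X] [Nonempty X] {c : ℝ}
    (h : ∀ G : SimpleGraph X, G.Connected → c ≤ graphWeight G) : c ≤ mstWeight X := by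
  apply le_csInf
  · exact ⟨_, ⊤, SimpleGraph.connected_top, rfl⟩
  · rintro _ ⟨G, hG, rfl⟩
    exact h G hG

lemma dist_le_mst {X : Type*} [MetricSpace X] [Fintype X] (x y : X) :
    dist x y ≤ mstWeight X := by
  have : Nonempty X := ⟨x⟩
  apply le_mst
  intro G hG
  have := conn_lower hG (fun z => dist z y) symDist (fun a b => by
    exact abs_dist_sub_le a b y) x y
  rw [dist_self, sub_zero] at this
  exact this

/-- edge potential difference -/
noncomputable def potDiff {X : Type*} (f : X → ℝ) : Sym2 X → ℝ :=
  Sym2.lift ⟨fun a b => |f a - f b|, fun a b => abs_sub_comm _ _⟩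

lemma net_le_mst {X : Type*} [MetricSpace X] [Fintype X] (r : ℝ) (hr : 0 < r)
    (N : Finset X)
    (hN : ∀ x ∈ N, ∀ y ∈ N, x ≠ y → r ≤ dist x y) (h2 : 2 ≤ N.card) :
    r * N.card ≤ 2 * mstWeight X := by
  classical
  have : Nonempty X := by
    obtain ⟨x, hx⟩ := Finset.card_pos.1 (by omega : 0 < N.card)
    exact ⟨x⟩
  suffices h : r / 2 * N.card ≤ mstWeight X by linarith
  apply le_mst
  intro G hG
  set f : X → X → ℝ := fun x z => max 0 (r / 2 - dist x z) with hf
  have h1 : ∀ x ∈ N, r / 2 ≤ ∑ e ∈ G.edgeSet.toFinite.toFinset, potDiff (f x) e := by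
    intro x hx
    obtain ⟨y, hy, hxy⟩ := Finset.exists_mem_ne (by omega : 1 < N.card) x
    have := conn_lower hG (f x) (potDiff (f x)) (fun _ _ => le_rfl) x y
    have e1 : f x x = r / 2 := by simp [hf]; linarith
    have e2 : f x y = 0 := by
      simp only [hf]; apply max_eq_left
      have := hN x hx y hy hxy.symm
      linarith
    rw [e1, e2] at this
    linarith
  have hz : ∀ u, ∀ x ∈ N, ∀ y ∈ N, x ≠ y → 0 < f x u → f y u = 0 := by
    intro u x hx y hy hxy h
    have h3 : 0 < r / 2 - dist x u := by
      by_contra hc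
      simp only [hf] at h
      rw [max_eq_left (by linarith)] at h
      exact lt_irrefl _ h
    simp only [hf]
    apply max_eq_left
    have := hN x hx y hy hxy
    have := dist_triangle x u y
    rw [dist_comm u y] at this
    linarith
  have hnn : ∀ x u, 0 ≤ f x u := fun x u => le_max_left _ _
  have hsum : ∀ u, ∀ x ∈ N, 0 < f x u → ∀ y ∈ N, y ≠ x → f y u = 0 :=
    fun u x hx h y hy hxy => hz u x hx y hy hxy.symm h
  have h2 : ∀ e : Sym2 X, ∑ x ∈ N, potDiff (f x) e ≤ symDist e := by
    intro e
    induction e with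
    | _ u v =>
    change ∑ x ∈ N, |f x u - f x v| ≤ dist u v
    by_cases hu : ∃ x ∈ N, 0 < f x u
    · obtain ⟨x, hx, hxu⟩ := hu
      have hxu' : f x u = r / 2 - dist x u := by
        simp only [hf] at hxu ⊢
        rcases max_choice 0 (r / 2 - dist x u) with h | h
        · rw [h] at hxu; exact absurd hxu (lt_irrefl _)
        · exact h
      by_cases hv : ∃ y ∈ N, 0 < f y v
      · obtain ⟨y, hy, hyv⟩ := hv
        have hyv' : f y v = r / 2 - dist y v := by
          simp only [hf] at hyv ⊢
          rcases max_choice 0 (r / 2 - dist y v) with h | h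
          · rw [h] at hyv; exact absurd hyv (lt_irrefl _)
          · exact h
        by_cases hxy : x = y
        · subst hxy
          rw [Finset.sum_eq_single_of_mem x hx]
          · rw [hxu', hyv']
            have := abs_dist_sub_le v u x
            rw [dist_comm v x, dist_comm u x, dist_comm v u] at this
            convert this using 2
            ring
          · intro b hb hbx
            rw [hsum u x hx hxu b hb hbx, hsum v x hx hyv b hb hbx]; simp
        · have : ∑ z ∈ N, |f z u - f z v| ≤ ∑ z ∈ N, (f z u + f z v) := by
            apply Finset.sum_le_sum
            intro z _
            rw [abs_le]
            have := hnn z u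
            have := hnn z v
            constructor <;> linarith
          refine this.trans ?_
          rw [Finset.sum_add_distrib, Finset.sum_eq_single_of_mem x hx (hsum u x hx hxu),
            Finset.sum_eq_single_of_mem y hy (hsum v y hy hyv), hxu', hyv']
          have := hN x hx y hy hxy
          have := dist_triangle4 x u v y
          rw [dist_comm v y] at this
          linarith
      · push Not at hv
        have hv' : ∀ y ∈ N, f y v = 0 := fun y hy => le_antisymm (hv y hy) (hnn y v)
        rw [Finset.sum_eq_single_of_mem x hx]
        · rw [hv' x hx, sub_zero, abs_of_pos hxu, hxu']
          have : f x v = 0 := hv' x hx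
          have : r / 2 - dist x v ≤ 0 := by rw [← this]; exact le_max_right _ _
          have := dist_triangle x u v
          linarith
        · intro b hb hbx
          rw [hsum u x hx hxu b hb hbx, hv' b hb]; simp
    · push Not at hu
      have hu' : ∀ y ∈ N, f y u = 0 := fun y hy => le_antisymm (hu y hy) (hnn y u)
      by_cases hv : ∃ y ∈ N, 0 < f y v
      · obtain ⟨y, hy, hyv⟩ := hv
        have hyv' : f y v = r / 2 - dist y v := by
          simp only [hf] at hyv ⊢
          rcases max_choice 0 (r / 2 - dist y v) with h | h
          · rw [h] at hyv; exact absurd hyv (lt_irrefl _)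
          · exact h
        rw [Finset.sum_eq_single_of_mem y hy]
        · rw [hu' y hy, zero_sub, abs_neg, abs_of_pos hyv, hyv']
          have : f y u = 0 := hu' y hy
          have : r / 2 - dist y u ≤ 0 := by rw [← this]; exact le_max_right _ _
          have := dist_triangle y v u
          rw [dist_comm v u] at this
          linarith
        · intro b hb hbx
          rw [hsum v y hy hyv b hb hbx, hu' b hb]; simp
      · push Not at hv
        have hv' : ∀ y ∈ N, f y v = 0 := fun y hy => le_antisymm (hv y hy) (hnn y v)
        rw [Finset.sum_eq_zero]
        · exact dist_nonneg
        · intro x hx; rw [hu' x hx, hv' x hx]; simp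
  calc r / 2 * N.card = ∑ x ∈ N, r / 2 := by simp [mul_comm]
    _ ≤ ∑ x ∈ N, ∑ e ∈ G.edgeSet.toFinite.toFinset, potDiff (f x) e := Finset.sum_le_sum h1
    _ = ∑ e ∈ G.edgeSet.toFinite.toFinset, ∑ x ∈ N, potDiff (f x) e := Finset.sum_comm
    _ ≤ graphWeight G := Finset.sum_le_sum fun e _ => h2 e

open Metric in
lemma ball_inter {d : ℕ} (x y : EuclideanSpace ℝ (Fin d)) (r t : ℝ) (hr : 0 < r) (ht : 2 ≤ t)
    (hxy : dist x y ≤ r) :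
    volume.real (closedBall x (t * r)) ≤
      2 * 2 ^ ((d : ℝ) / t ^ 2) * volume.real (closedBall x (t * r) ∩ closedBall y (t * r)) := by
  set R := t * r with hR
  have hRpos : 0 < R := by positivity
  set q : ℝ := 1 - 1 / t ^ 2 with hq
  have ht2 : 1 / t ^ 2 ≤ 1 / 4 := by
    apply one_div_le_one_div_of_le <;> nlinarith
  have ht2' : 0 < 1 / t ^ 2 := by positivity
  have hqpos : 0 < q := by linarith
  set ρ := Real.sqrt q * R with hρ
  have hρpos : 0 < ρ := by positivity
  have hρ2 : ρ ^ 2 = R ^ 2 - r ^ 2 := by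
    rw [hρ, mul_pow, Real.sq_sqrt hqpos.le, hq, hR]; field_simp
  set u := y - x with hu
  have hun : ‖u‖ ≤ r := by rw [hu, ← dist_eq_norm, dist_comm]; exact hxy
  let A : Set (EuclideanSpace ℝ (Fin d)) := closedBall 0 ρ ∩ {z | 0 ≤ inner ℝ z u}
  let A' : Set (EuclideanSpace ℝ (Fin d)) := closedBall 0 ρ ∩ {z | inner ℝ z u ≤ 0}
  have hfinA : volume A ≠ ⊤ := ne_top_of_le_ne_top
    (measure_closedBall_lt_top (x := (0 : EuclideanSpace ℝ (Fin d))) (r := ρ)).ne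
      (measure_mono Set.inter_subset_left)
  have hAA' : volume A' = volume A := by
    have : A' = (fun z => -z) ⁻¹' A := by
      ext z; simp [A, A']
    rw [this]
    exact Measure.measure_preimage_neg volume A
  have h1 : volume.real (closedBall (0 : EuclideanSpace ℝ (Fin d)) ρ) ≤ 2 * volume.real A := by
    have : closedBall (0 : EuclideanSpace ℝ (Fin d)) ρ ⊆ A ∪ A' := by
      intro z hz
      rcases le_total 0 (inner ℝ z u) with h | h
      · exact Or.inl ⟨hz, h⟩
      · exact Or.inr ⟨hz, h⟩
    have h3 := measureReal_mono (μ := volume) this (by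
      refine ((measure_union_le _ _).trans_lt ?_).ne
      rw [hAA']
      exact ENNReal.add_lt_top.2 ⟨hfinA.lt_top, hfinA.lt_top⟩)
    have h4 := measureReal_union_le (μ := volume) A A'
    have h5 : volume.real A' = volume.real A := by simp [Measure.real, hAA']
    linarith
  have h2 : volume.real A ≤ volume.real (closedBall x R ∩ closedBall y R) := by
    have e : volume A = volume ((fun z => z + (-x)) ⁻¹' A) := by
      rw [measure_preimage_add_right]
    have : volume.real A = volume.real ((fun z => z + (-x)) ⁻¹' A) := by
      simp only [Measure.real, ← e]
    rw [this]
    apply measureReal_mono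
    · intro z hz
      obtain ⟨hz1, hz2⟩ := hz
      have hz1 : ‖z + -x‖ ≤ ρ := by simpa using hz1
      have hz2 : 0 ≤ inner ℝ (z + -x) u := hz2
      have hz3 : ‖z + -x‖ ^ 2 ≤ R ^ 2 - r ^ 2 := by
        rw [← hρ2]; gcongr
      constructor
      · rw [mem_closedBall, dist_eq_norm, sub_eq_add_neg]
        refine hz1.trans ?_
        apply le_of_sq_le_sq _ hRpos.le
        nlinarith
      · rw [mem_closedBall, dist_eq_norm]
        have : z - y = (z + -x) - u := by rw [hu]; abel
        rw [this]
        apply le_of_sq_le_sq _ hRpos.le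
        rw [norm_sub_sq_real]
        have : ‖u‖ ^ 2 ≤ r ^ 2 := by gcongr
        nlinarith
    · exact ne_top_of_le_ne_top (measure_closedBall_lt_top (x := x) (r := R)).ne
        (measure_mono Set.inter_subset_left)
  have h3 : volume.real (closedBall x R) ≤
      2 ^ ((d : ℝ) / t ^ 2) * volume.real (closedBall (0 : EuclideanSpace ℝ (Fin d)) ρ) := by
    have e1 : volume.real (closedBall x R) =
        R ^ d * volume.real (ball (0 : EuclideanSpace ℝ (Fin d)) 1) := by
      simp only [Measure.real]
      rw [Measure.addHaar_closedBall _ _ hRpos.le]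
      simp [pow_nonneg hRpos.le]
    have e2 : volume.real (closedBall (0 : EuclideanSpace ℝ (Fin d)) ρ) =
        ρ ^ d * volume.real (ball (0 : EuclideanSpace ℝ (Fin d)) 1) := by
      simp only [Measure.real]
      rw [Measure.addHaar_closedBall _ _ hρpos.le]
      simp [pow_nonneg hρpos.le]
    rw [e1, e2, ← mul_assoc]
    apply mul_le_mul_of_nonneg_right _ measureReal_nonneg
    have e3 : (2 : ℝ) ^ ((d : ℝ) / t ^ 2) = ((2 : ℝ) ^ (1 / t ^ 2)) ^ d := by
      rw [← Real.rpow_mul_natCast (by norm_num)]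
      congr 1; ring
    rw [e3, ← mul_pow]
    apply pow_le_pow_left₀ hRpos.le
    rw [hρ, ← mul_assoc]
    apply le_mul_of_one_le_left hRpos.le
    set a := 1 / t ^ 2 with ha
    -- (2^a * sqrt q) ≥ 1
    have hb : (1 : ℝ) + a * Real.log 2 ≤ 2 ^ a := by
      rw [Real.rpow_def_of_pos (by norm_num)]
      have := Real.add_one_le_exp (Real.log 2 * a)
      linarith
    have hl := Real.log_two_gt_d9
    have hb' : (1 : ℝ) + a * 0.69 ≤ 2 ^ a := by nlinarith
    have hs : 1 ≤ ((2 : ℝ) ^ a * Real.sqrt q) ^ 2 := by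
      rw [mul_pow, Real.sq_sqrt hqpos.le]
      have : (1 + a * 0.69) ^ 2 ≤ ((2 : ℝ) ^ a) ^ 2 := by gcongr
      have : (1 + a * 0.69) ^ 2 * q ≤ ((2 : ℝ) ^ a) ^ 2 * q := by gcongr
      refine le_trans ?_ this
      rw [hq]
      nlinarith [mul_pos ht2' ht2']
    exact (one_le_sq_iff₀ (by positivity)).1 hs
  calc _ ≤ _ := h3
    _ ≤ 2 ^ ((d : ℝ) / t ^ 2) * (2 * volume.real (closedBall x R ∩ closedBall y R)) := by
      gcongr; linarith
    _ = _ := by ring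

open Metric in
lemma greedy_step {d : ℕ} (s : Finset (EuclideanSpace ℝ (Fin d))) (r t : ℝ) (hr : 0 < r)
    (ht : 2 ≤ t) (D : Finset s) (U : Finset (s × s)) (hU : ∀ p ∈ U, dist p.1 p.2 ≤ r)
    (hne : U.Nonempty) :
    ∃ c : EuclideanSpace ℝ (Fin d),
      (∃ p ∈ U, dist (p.1 : EuclideanSpace ℝ (Fin d)) c ≤ t * r ∧
        dist (p.2 : EuclideanSpace ℝ (Fin d)) c ≤ t * r) ∧
      ((D.filter fun x : s => dist (x : EuclideanSpace ℝ (Fin d)) c ≤ t * r).card : ℝ) * U.card ≤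
        4 * 2 ^ ((d : ℝ) / t ^ 2) * D.card *
        (U.filter fun p => dist (p.1 : EuclideanSpace ℝ (Fin d)) c ≤ t * r ∧
          dist (p.2 : EuclideanSpace ℝ (Fin d)) c ≤ t * r).card := by
  classical
  rcases D.eq_empty_or_nonempty with rfl | hD
  · obtain ⟨p, hp⟩ := hne
    refine ⟨p.1, ⟨p, hp, ?_, ?_⟩, by simp⟩
    · simp; positivity
    · have := hU p hp
      rw [dist_comm] at this
      have : dist (p.2 : EuclideanSpace ℝ (Fin d)) p.1 ≤ r := this
      nlinarith
  by_contra hcon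
  push Not at hcon
  set K : ℝ := 2 * 2 ^ ((d : ℝ) / t ^ 2) with hK
  have hKpos : 0 < K := by positivity
  set R := t * r with hR
  have hRpos : 0 < R := by positivity
  let cost : EuclideanSpace ℝ (Fin d) → ℝ := fun c =>
    ∑ x ∈ D, (closedBall (x : EuclideanSpace ℝ (Fin d)) R).indicator (fun _ => (1 : ℝ)) c
  let new : EuclideanSpace ℝ (Fin d) → ℝ := fun c =>
    ∑ p ∈ U, (closedBall (p.1 : EuclideanSpace ℝ (Fin d)) R ∩
      closedBall (p.2 : EuclideanSpace ℝ (Fin d)) R).indicator (fun _ => (1 : ℝ)) c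
  have hcost : ∀ c, cost c =
      ((D.filter fun x : s => dist (x : EuclideanSpace ℝ (Fin d)) c ≤ R).card : ℝ) := by
    intro c
    simp only [cost, Finset.card_filter, Set.indicator_apply, mem_closedBall]
    push_cast
    apply Finset.sum_congr rfl
    intro x _
    rw [dist_comm]
  have hnew : ∀ c, new c =
      ((U.filter fun p => dist (p.1 : EuclideanSpace ℝ (Fin d)) c ≤ R ∧
          dist (p.2 : EuclideanSpace ℝ (Fin d)) c ≤ R).card : ℝ) := by
    intro c
    simp only [new, Finset.card_filter, Set.indicator_apply, mem_closedBall, Set.mem_inter_iff]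
    push_cast
    apply Finset.sum_congr rfl
    intro x _
    rw [dist_comm c, dist_comm c]
  have hpt : ∀ c, 2 * K * D.card * new c ≤ U.card * cost c := by
    intro c
    by_cases h : ∃ p ∈ U, dist (p.1 : EuclideanSpace ℝ (Fin d)) c ≤ R ∧
        dist (p.2 : EuclideanSpace ℝ (Fin d)) c ≤ R
    · obtain ⟨p, hp, h1, h2⟩ := h
      have := hcon c ⟨p, hp, h1, h2⟩
      rw [hcost, hnew, hK]
      linarith
    · have : new c = 0 := by
        rw [hnew]
        push Not at h
        simp only [Nat.cast_eq_zero, Finset.card_eq_zero]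
        rw [Finset.filter_eq_empty_iff]
        intro p hp hh
        exact absurd hh.2 (not_le.2 (h p hp hh.1))
      rw [this, hcost]
      simp only [mul_zero]
      positivity
  have hint1 : ∀ x : EuclideanSpace ℝ (Fin d), Integrable
      ((closedBall x R).indicator (fun _ => (1 : ℝ))) volume := by
    intro x
    rw [integrable_indicator_iff measurableSet_closedBall]
    exact integrableOn_const measure_closedBall_lt_top.ne
  have hint2 : ∀ x y : EuclideanSpace ℝ (Fin d), Integrable
      ((closedBall x R ∩ closedBall y R).indicator (fun _ => (1 : ℝ))) volume := by
    intro x y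
    rw [integrable_indicator_iff (measurableSet_closedBall.inter measurableSet_closedBall)]
    exact integrableOn_const (ne_top_of_le_ne_top (measure_closedBall_lt_top (x := x) (r := R)).ne
        (measure_mono Set.inter_subset_left))
  have hic : Integrable cost volume := integrable_finsetSum _ fun x _ => hint1 _
  have hin : Integrable new volume := integrable_finsetSum _ fun x _ => hint2 _ _
  have hI := integral_mono (hin.const_mul (2 * K * D.card)) (hic.const_mul (U.card : ℝ)) hpt
  rw [integral_const_mul, integral_const_mul] at hI
  set V := volume.real (closedBall (0 : EuclideanSpace ℝ (Fin d)) R) with hV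
  have hVx : ∀ x : EuclideanSpace ℝ (Fin d), volume.real (closedBall x R) = V := by
    intro x
    simp only [hV, Measure.real]
    rw [Measure.addHaar_closedBall_center]
  have hVpos : 0 < V := by
    simp only [hV, Measure.real]
    exact ENNReal.toReal_pos (measure_closedBall_pos _ _ hRpos).ne' measure_closedBall_lt_top.ne
  have hc : ∫ c, cost c = D.card * V := by
    simp only [cost]
    rw [integral_finsetSum _ fun x _ => hint1 _]
    simp [integral_indicator_const, measurableSet_closedBall, hVx]
  have hn : (U.card : ℝ) * V ≤ K * ∫ c, new c := by
    simp only [new]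
    rw [integral_finsetSum _ fun x _ => hint2 _ _, Finset.mul_sum]
    rw [← nsmul_eq_mul, ← Finset.sum_const]
    apply Finset.sum_le_sum
    intro p hp
    rw [integral_indicator_const _ (measurableSet_closedBall.inter measurableSet_closedBall)]
    rw [← hVx p.1]
    simpa using ball_inter (p.1 : EuclideanSpace ℝ (Fin d)) p.2 r t hr ht (hU p hp)
  rw [hc] at hI
  have hDc : (0 : ℝ) < D.card := by exact_mod_cast hD.card_pos
  have hUc : (0 : ℝ) < U.card := by exact_mod_cast hne.card_pos
  have : 2 * D.card * (U.card * V) ≤ 2 * D.card * (K * ∫ c, new c) := by gcongr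
  have : 0 < U.card * (D.card * V) := by positivity
  linarith

lemma greedy_cover {d : ℕ} (s : Finset (EuclideanSpace ℝ (Fin d))) (r t : ℝ) (hr : 0 < r)
    (ht : 2 ≤ t) (D : Finset s) (m : ℕ) : ∀ (U : Finset (s × s)), U.card = m →
    (∀ p ∈ U, dist p.1 p.2 ≤ r) →
    U.Nonempty →
    ∃ Cs : Finset (EuclideanSpace ℝ (Fin d)),
      (∀ p ∈ U, ∃ c ∈ Cs, dist (p.1 : EuclideanSpace ℝ (Fin d)) c ≤ t * r ∧
        dist (p.2 : EuclideanSpace ℝ (Fin d)) c ≤ t * r) ∧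
      ∑ c ∈ Cs, ((D.filter fun x : s => dist (x : EuclideanSpace ℝ (Fin d)) c ≤ t * r).card : ℝ) ≤
        4 * 2 ^ ((d : ℝ) / t ^ 2) * D.card * (1 + Real.log U.card) := by
  classical
  induction m using Nat.strong_induction_on with
  | _ m ih =>
  intro U hm hU hne
  obtain ⟨c, ⟨p, hp, hp1⟩, hc⟩ := greedy_step s r t hr ht D U hU hne
  set P : s × s → Prop := fun p => dist (p.1 : EuclideanSpace ℝ (Fin d)) c ≤ t * r ∧
          dist (p.2 : EuclideanSpace ℝ (Fin d)) c ≤ t * r with hP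
  set K : ℝ := 4 * 2 ^ ((d : ℝ) / t ^ 2) * D.card with hK
  have hKnn : 0 ≤ K := by positivity
  have hUc : (0 : ℝ) < U.card := by exact_mod_cast hne.card_pos
  have hcard : (U.filter P).card + (U.filter fun p => ¬ P p).card = U.card :=
    Finset.card_filter_add_card_filter_not _
  have hpos : 0 < (U.filter P).card := Finset.card_pos.2 ⟨p, Finset.mem_filter.2 ⟨hp, hp1⟩⟩
  have hcc : ((D.filter fun x : s => dist (x : EuclideanSpace ℝ (Fin d)) c ≤ t * r).card : ℝ) ≤
      K * ((U.filter P).card / U.card) := by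
    rw [← mul_div_assoc, le_div_iff₀ hUc]
    exact hc
  rcases (U.filter fun p => ¬ P p).eq_empty_or_nonempty with h0 | h1
  · refine ⟨{c}, ?_, ?_⟩
    · intro q hq
      refine ⟨c, by simp, ?_⟩
      by_contra hh
      have : q ∈ U.filter fun p => ¬ P p := Finset.mem_filter.2 ⟨hq, hh⟩
      rw [h0] at this
      simp at this
    · rw [Finset.sum_singleton]
      refine hcc.trans ?_
      apply mul_le_mul_of_nonneg_left _ hKnn
      have : (U.filter P).card = U.card := by rw [h0] at hcard; simpa using hcard
      rw [this, div_self hUc.ne']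
      have : 0 ≤ Real.log U.card := Real.log_natCast_nonneg _
      linarith
  · obtain ⟨Cs, hCs1, hCs2⟩ := ih (U.filter fun p => ¬ P p).card (by omega) _ rfl
      (fun q hq => hU q (Finset.mem_filter.1 hq).1) h1
    refine ⟨insert c Cs, ?_, ?_⟩
    · intro q hq
      by_cases hh : P q
      · exact ⟨c, Finset.mem_insert_self _ _, hh⟩
      · obtain ⟨c', hc', h⟩ := hCs1 q (Finset.mem_filter.2 ⟨hq, hh⟩)
        exact ⟨c', Finset.mem_insert_of_mem hc', h⟩
    · have hle : ∑ c ∈ insert c Cs,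
          ((D.filter fun x : s => dist (x : EuclideanSpace ℝ (Fin d)) c ≤ t * r).card : ℝ) ≤
          ((D.filter fun x : s => dist (x : EuclideanSpace ℝ (Fin d)) c ≤ t * r).card : ℝ) +
          ∑ c ∈ Cs,
          ((D.filter fun x : s => dist (x : EuclideanSpace ℝ (Fin d)) c ≤ t * r).card : ℝ) := by
        by_cases hcm : c ∈ Cs
        · rw [Finset.insert_eq_of_mem hcm]
          have : (0 : ℝ) ≤
            ((D.filter fun x : s => dist (x : EuclideanSpace ℝ (Fin d)) c ≤ t * r).card : ℝ) := by
            positivity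
          linarith
        · rw [Finset.sum_insert hcm]
      refine hle.trans ((add_le_add hcc hCs2).trans ?_)
      rw [← mul_add]
      apply mul_le_mul_of_nonneg_left _ hKnn
      have hb : (0 : ℝ) < (U.filter fun p => ¬ P p).card := by exact_mod_cast h1.card_pos
      have := Real.log_le_sub_one_of_pos (div_pos hb hUc)
      rw [Real.log_div hb.ne' hUc.ne'] at this
      have e : ((U.filter P).card : ℝ) / U.card =
          1 - ((U.filter fun p => ¬ P p).card : ℝ) / U.card := by
        rw [eq_sub_iff_add_eq, ← add_div, div_eq_one_iff_eq hUc.ne']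
        exact_mod_cast hcard
      rw [e]
      linarith

lemma scale_lemma {d : ℕ} (s : Finset (EuclideanSpace ℝ (Fin d))) (r t : ℝ) (hr : 0 < r)
    (ht : 2 ≤ t) (D N : Finset s)
    (hD : ∀ x ∈ N, ∀ y ∈ N, x ∉ D → y ∉ D → dist x y ≤ 2 * (t * r) → x = y) :
    ∃ E : Finset (Sym2 s),
      (E.card : ℝ) ≤ 4 * 2 ^ ((d : ℝ) / t ^ 2) * D.card * (1 + 2 * Real.log s.card) ∧
      (∀ e ∈ E, symDist e ≤ 2 * (t * r)) ∧
      (∀ x ∈ N, ∀ y ∈ N, dist x y ≤ r → ∃ a, (s(x, a) ∈ E ∨ x = a) ∧ (s(a, y) ∈ E ∨ a = y)) := by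
  classical
  set U : Finset (s × s) := (N ×ˢ N).filter fun p => dist p.1 p.2 ≤ r with hUdef
  have hlog : 0 ≤ Real.log s.card := Real.log_natCast_nonneg _
  rcases U.eq_empty_or_nonempty with h0 | h1
  · refine ⟨∅, ?_, by simp, ?_⟩
    · simp only [Finset.card_empty, Nat.cast_zero]; positivity
    · intro x hx y hy hxy
      have : (x, y) ∈ U := by simp [hUdef, hx, hy, hxy]
      rw [h0] at this
      simp at this
  obtain ⟨Cs, hCs1, hCs2⟩ := greedy_cover s r t hr ht D U.card U rfl
    (fun p hp => (Finset.mem_filter.1 hp).2) h1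
  let Cl : EuclideanSpace ℝ (Fin d) → Finset s := fun c =>
    N.filter fun x : s => dist (x : EuclideanSpace ℝ (Fin d)) c ≤ t * r
  have hCl : ∀ c, ∀ x ∈ Cl c, ∀ y ∈ Cl c, dist x y ≤ 2 * (t * r) := by
    intro c x hx y hy
    have h1 := (Finset.mem_filter.1 hx).2
    have h2 := (Finset.mem_filter.1 hy).2
    have h3 := dist_triangle_right (x : EuclideanSpace ℝ (Fin d)) y c
    have : dist x y = dist (x : EuclideanSpace ℝ (Fin d)) y := rfl
    linarith
  have hstar : ∀ c, ∃ F : Finset (Sym2 s),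
      F.card ≤ (D.filter fun x : s => dist (x : EuclideanSpace ℝ (Fin d)) c ≤ t * r).card ∧
      (∀ e ∈ F, symDist e ≤ 2 * (t * r)) ∧
      (∀ x ∈ Cl c, ∀ y ∈ Cl c, ∃ a, (s(x, a) ∈ F ∨ x = a) ∧ (s(a, y) ∈ F ∨ a = y)) := by
    intro c
    have key : ∀ a ∈ Cl c, (∀ x ∈ Cl c, x ≠ a → x ∈ D) → ∃ F : Finset (Sym2 s),
      F.card ≤ (D.filter fun x : s => dist (x : EuclideanSpace ℝ (Fin d)) c ≤ t * r).card ∧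
      (∀ e ∈ F, symDist e ≤ 2 * (t * r)) ∧
      (∀ x ∈ Cl c, ∀ y ∈ Cl c, ∃ a, (s(x, a) ∈ F ∨ x = a) ∧ (s(a, y) ∈ F ∨ a = y)) := by
      intro a ha haD
      refine ⟨((Cl c).erase a).image fun x => s(x, a), ?_, ?_, ?_⟩
      · refine Finset.card_image_le.trans (Finset.card_le_card ?_)
        intro x hx
        obtain ⟨h1, h2⟩ := Finset.mem_erase.1 hx
        exact Finset.mem_filter.2 ⟨haD x h2 h1, (Finset.mem_filter.1 h2).2⟩
      · intro e he
        obtain ⟨x, hx, rfl⟩ := Finset.mem_image.1 he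
        exact hCl c x (Finset.mem_erase.1 hx).2 a ha
      · have : ∀ x ∈ Cl c, s(x, a) ∈ (((Cl c).erase a).image fun x => s(x, a)) ∨ x = a := by
          intro x hx
          by_cases hxa : x = a
          · exact Or.inr hxa
          · exact Or.inl (Finset.mem_image.2 ⟨x, Finset.mem_erase.2 ⟨hxa, hx⟩, rfl⟩)
        intro x hx y hy
        refine ⟨a, this x hx, ?_⟩
        rw [Sym2.eq_swap]
        exact (this y hy).imp id Eq.symm
    by_cases h : ∃ a ∈ Cl c, a ∉ D
    · obtain ⟨a, ha, haD⟩ := h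
      refine key a ha ?_
      intro x hx hxa
      by_contra hxD
      exact hxa (hD x (Finset.mem_filter.1 hx).1 a (Finset.mem_filter.1 ha).1 hxD haD
        (hCl c x hx a ha))
    · push Not at h
      rcases (Cl c).eq_empty_or_nonempty with h0 | ⟨a, ha⟩
      · refine ⟨∅, by simp, by simp, ?_⟩
        rw [h0]; simp
      · exact key a ha fun x hx _ => h x hx
  choose F hF1 hF2 hF3 using hstar
  refine ⟨Cs.biUnion F, ?_, ?_, ?_⟩
  · have h2 : ((Cs.biUnion F).card : ℝ) ≤ ∑ c ∈ Cs,
        ((D.filter fun x : s => dist (x : EuclideanSpace ℝ (Fin d)) c ≤ t * r).card : ℝ) := by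
      have h3 : ((Cs.biUnion F).card : ℝ) ≤ ((∑ c ∈ Cs, (F c).card : ℕ) : ℝ) :=
        Nat.cast_le.2 Finset.card_biUnion_le
      refine h3.trans ?_
      push_cast
      apply Finset.sum_le_sum
      intro c _
      exact_mod_cast hF1 c
    refine h2.trans (hCs2.trans ?_)
    apply mul_le_mul_of_nonneg_left _ (by positivity)
    have hUle : U.card ≤ s.card ^ 2 := by
      calc U.card ≤ (N ×ˢ N).card := Finset.card_filter_le _ _
        _ = N.card * N.card := Finset.card_product _ _
        _ ≤ s.card * s.card := by
          have : N.card ≤ s.card := by simpa using Finset.card_le_univ N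
          gcongr
        _ = _ := by ring
    have : Real.log U.card ≤ Real.log ((s.card : ℝ) ^ 2) := by
      apply Real.log_le_log
      · exact_mod_cast h1.card_pos
      · exact_mod_cast hUle
    rw [Real.log_pow] at this
    push_cast at this
    linarith
  · intro e he
    obtain ⟨c, _, hc⟩ := Finset.mem_biUnion.1 he
    exact hF2 c e hc
  · intro x hx y hy hxy
    obtain ⟨c, hc, h1, h2⟩ := hCs1 (x, y) (by simp [hUdef, hx, hy, hxy])
    obtain ⟨a, ha1, ha2⟩ := hF3 c x (Finset.mem_filter.2 ⟨hx, h1⟩) y (Finset.mem_filter.2 ⟨hy, h2⟩)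
    exact ⟨a, ha1.imp (fun h => Finset.mem_biUnion.2 ⟨c, hc, h⟩) id,
      ha2.imp (fun h => Finset.mem_biUnion.2 ⟨c, hc, h⟩) id⟩

lemma walkWeight_append' {X : Type*} [MetricSpace X] {G : SimpleGraph X} {u v w : X}
    (p : G.Walk u v) (q : G.Walk v w) :
    walkWeight (p.append q) = walkWeight p + walkWeight q := by
  simp [walkWeight]

lemma walk_nonneg {X : Type*} [MetricSpace X] {G : SimpleGraph X} {u v : X}
    (p : G.Walk u v) : dist u v ≤ walkWeight p := by
  have := dist_le_walkWeight (fun z => dist z v) symDist (fun a b => abs_dist_sub_le a b v) p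
  rw [dist_self, sub_zero] at this
  exact this

lemma isSpanner_of {X : Type*} [MetricSpace X] (G : SimpleGraph X) (c : ℝ)
    (h : ∀ u v : X, ∃ p : G.Walk u v, walkWeight p ≤ c * dist u v) : IsSpanner G c := by
  intro u v
  obtain ⟨p, hp⟩ := h u v
  constructor
  · apply le_csInf
    · exact ⟨_, p, rfl⟩
    · rintro _ ⟨q, rfl⟩
      exact walk_nonneg q
  · refine le_trans (csInf_le ?_ ⟨p, rfl⟩) hp
    refine ⟨0, ?_⟩
    rintro _ ⟨q, rfl⟩
    exact dist_nonneg.trans (walk_nonneg q)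

lemma sum_tele {X : Type*} [Fintype X] [DecidableEq X] (N : ℕ → Finset X)
    (hN : ∀ i, N (i + 1) ⊆ N i) (k L : ℕ) :
    ∑ i ∈ Finset.range L, ((N i \ N (i + k)).card : ℝ) ≤ k * Fintype.card X := by
  have hanti : Antitone N := antitone_nat_of_succ_le hN
  have h1 : ∀ i, ((N i \ N (i + k)).card : ℝ) = (N i).card - (N (i + k)).card := by
    intro i
    rw [Finset.cast_card_sdiff (hanti (Nat.le_add_right i k))]
  simp only [h1, Finset.sum_sub_distrib]
  have h2 : ∑ i ∈ Finset.range L, ((N i).card : ℝ) ≤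
      ∑ i ∈ Finset.range (k + L), ((N i).card : ℝ) := by
    apply Finset.sum_le_sum_of_subset_of_nonneg
    · intro i; simp only [Finset.mem_range]; omega
    · intros; positivity
  rw [Finset.sum_range_add] at h2
  have h3 : ∑ i ∈ Finset.range k, ((N i).card : ℝ) ≤ k * Fintype.card X := by
    calc _ ≤ ∑ i ∈ Finset.range k, (Fintype.card X : ℝ) := by
          apply Finset.sum_le_sum
          intro i _
          exact_mod_cast Finset.card_le_univ _
      _ = _ := by simp
  have h4 : ∑ i ∈ Finset.range L, ((N (k + i)).card : ℝ) =
      ∑ i ∈ Finset.range L, ((N (i + k)).card : ℝ) := by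
    simp only [add_comm]
  linarith

lemma sum_weight (a : ℕ → ℝ) (l m : ℕ) (W : ℝ) (hW : 0 ≤ W)
    (h1 : ∀ i ≤ l, a i ≤ 2 * W) (h2 : ∀ i ≤ l, a i * 2 ^ (l - i) ≤ W * 2 ^ m) :
    ∑ i ∈ Finset.range (l + 1), a i ≤ (2 * m + 2) * W := by
  rw [← Finset.sum_range_reflect]
  set b : ℕ → ℝ := fun j => if j < m then 2 * W else W * 2 ^ m / 2 ^ j with hb
  have hbn : ∀ j, 0 ≤ b j := by
    intro j
    simp only [hb]
    split_ifs <;> positivity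
  calc ∑ j ∈ Finset.range (l + 1), a (l + 1 - 1 - j) ≤ ∑ j ∈ Finset.range (l + 1), b j := by
        apply Finset.sum_le_sum
        intro j hj
        have hj : j ≤ l := by simp at hj; omega
        simp only [Nat.add_sub_cancel, hb]
        split_ifs
        · exact h1 _ (by omega)
        · rw [le_div_iff₀ (by positivity)]
          have := h2 (l - j) (by omega)
          rwa [Nat.sub_sub_self hj] at this
    _ ≤ ∑ j ∈ Finset.range (m + (l + 1)), b j := by
        apply Finset.sum_le_sum_of_subset_of_nonneg
        · intro i; simp only [Finset.mem_range]; omega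
        · intros; exact hbn _
    _ = ∑ j ∈ Finset.range m, 2 * W + ∑ j ∈ Finset.range (l + 1), W * (1 / 2) ^ j := by
        rw [Finset.sum_range_add]
        congr 1
        · apply Finset.sum_congr rfl
          intro j hj
          simp only [hb]; rw [if_pos (Finset.mem_range.1 hj)]
        · apply Finset.sum_congr rfl
          intro j hj
          simp only [hb]; rw [if_neg (by omega), pow_add, one_div, inv_pow]
          field_simp
    _ ≤ _ := by
        have : ∑ j ∈ Finset.range (l + 1), ((1 : ℝ) / 2) ^ j ≤ 2 := sum_geometric_two_le _
        have := mul_le_mul_of_nonneg_left this hW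
        rw [Finset.mul_sum] at this
        simp only [Finset.sum_const, Finset.card_range, nsmul_eq_mul]
        linarith

lemma k_exists (t : ℝ) (ht : 2 ≤ t) : ∃ k : ℕ, 12 * t < 2 ^ k ∧ (k : ℝ) ≤ 9 * Real.log t := by
  obtain ⟨j, h1, h2⟩ := exists_nat_pow_near (by linarith : (1 : ℝ) ≤ 12 * t) (one_lt_two)
  refine ⟨j + 1, h2, ?_⟩
  have h3 := Real.log_le_log (by positivity) (h1.trans (by linarith : 12 * t ≤ 2 ^ 4 * t))
  rw [Real.log_mul (by positivity) (by positivity), Real.log_pow, Real.log_pow] at h3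
  have h4 := Real.log_le_log (by positivity) ht
  have h5 := Real.log_two_gt_d9
  push_cast at h3 ⊢
  have h6 : 0 ≤ (j : ℝ) := by positivity
  nlinarith

lemma m_exists (n : ℕ) (hn : 2 ≤ n) : ∃ m : ℕ, (n : ℝ) ≤ 2 ^ m ∧
    (2 * m + 2 : ℝ) ≤ 9 * Real.log n := by
  have hn' : (2 : ℝ) ≤ n := by exact_mod_cast hn
  obtain ⟨j, h1, h2⟩ := exists_nat_pow_near (by linarith : (1 : ℝ) ≤ n) (one_lt_two)
  refine ⟨j + 1, h2.le, ?_⟩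
  have h3 := Real.log_le_log (by positivity) h1
  rw [Real.log_pow] at h3
  have h4 := Real.log_le_log (by positivity) hn'
  have h5 := Real.log_two_gt_d9
  push_cast
  have h6 : 0 ≤ (j : ℝ) := by positivity
  nlinarith

lemma sum_biUnion_le' {α : Type*} [DecidableEq α] (I : Finset ℕ) (E : ℕ → Finset α)
    (f : α → ℝ) (hf : ∀ a, 0 ≤ f a) :
    ∑ e ∈ I.biUnion E, f e ≤ ∑ i ∈ I, ∑ e ∈ E i, f e := by
  induction I using Finset.induction_on with
  | empty => simp
  | insert i I hi ih =>
    rw [Finset.biUnion_insert, Finset.sum_insert hi]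
    have h1 := Finset.sum_union_inter (s₁ := E i) (s₂ := I.biUnion E) (f := f)
    have h2 : 0 ≤ ∑ e ∈ E i ∩ I.biUnion E, f e := Finset.sum_nonneg fun a _ => hf a
    linarith

lemma main_lemma {d : ℕ} (s : Finset (EuclideanSpace ℝ (Fin d))) (t : ℝ)
    (hs : ∀ x ∈ s, ∀ y ∈ s, x ≠ y → 1 ≤ dist x y) (ht : 2 ≤ t) (hn : 2 ≤ s.card) :
    ∃ H : SimpleGraph ↥s,
      IsSpanner H (1728 * t) ∧
      graphWeight H ≤ 1728 * t * (2 : ℝ) ^ ((d : ℝ) / t ^ 2) *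
              Real.log s.card ^ 2 * mstWeight ↥s ∧
      (edgeCount H : ℝ) ≤ 1728 * (s.card : ℝ) * (2 : ℝ) ^ ((d : ℝ) / t ^ 2) *
              Real.log s.card * Real.log t := by
  classical
  have hX : ∀ x y : s, x ≠ y → 1 ≤ dist x y := fun x y h =>
    hs x x.2 y y.2 (fun h' => h (Subtype.ext h'))
  obtain ⟨N, hN0, hNsub, hNsep, hNcov⟩ := nets_exist hX
  have hanti : Antitone N := antitone_nat_of_succ_le hNsub
  obtain ⟨k, hk1, hk2⟩ := k_exists t ht
  obtain ⟨m, hm1, hm2⟩ := m_exists s.card hn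
  set K : ℝ := (2 : ℝ) ^ ((d : ℝ) / t ^ 2) with hK
  have hKpos : 0 < K := by positivity
  set W := mstWeight ↥s with hW
  set n := s.card with hndef
  set lg := Real.log n with hlg
  have hlg2 : 1 + 2 * lg ≤ 4 * lg := by
    have : Real.log 2 ≤ lg := Real.log_le_log (by norm_num) (by exact_mod_cast hn)
    have := Real.log_two_gt_d9
    linarith
  have hlg0 : 0 ≤ lg := by linarith
  have hlt0 : 0 ≤ Real.log t := Real.log_nonneg (by linarith)
  -- diameter
  obtain ⟨a0, b0, hab0⟩ : ∃ a b : s, a ≠ b := by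
    have : 1 < Fintype.card s := by rw [Fintype.card_coe]; exact hn
    obtain ⟨a, b, h⟩ := Fintype.one_lt_card_iff.1 this
    exact ⟨a, b, h⟩
  obtain ⟨pq, -, hpq⟩ := Finset.exists_max_image (Finset.univ : Finset (s × s))
    (fun p => dist p.1 p.2) ⟨(a0, b0), Finset.mem_univ _⟩
  set M := dist pq.1 pq.2 with hM
  have hMle : ∀ x y : s, dist x y ≤ M := fun x y => hpq (x, y) (Finset.mem_univ _)
  have hM1 : 1 ≤ M := (hX a0 b0 hab0).trans (hMle _ _)
  have hMW : M ≤ W := dist_le_mst _ _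
  have hW0 : 0 ≤ W := by linarith
  obtain ⟨l, hl1, hl2⟩ := exists_nat_pow_near hM1 (one_lt_two)
  -- scales
  have hscale := fun i : ℕ => scale_lemma s (6 * 2 ^ i) t (by positivity) ht (N i \ N (i + k)) (N i)
    (by
      intro x hx y hy hxD hyD hd
      by_contra hxy
      have hx' : x ∈ N (i + k) := by
        by_contra h; exact hxD (Finset.mem_sdiff.2 ⟨hx, h⟩)
      have hy' : y ∈ N (i + k) := by
        by_contra h; exact hyD (Finset.mem_sdiff.2 ⟨hy, h⟩)
      have h1 := hNsep (i + k) x hx' y hy' hxy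
      rw [pow_add] at h1
      have h2 : (0 : ℝ) < 2 ^ i := by positivity
      nlinarith)
  choose E hE1 hE2 hE3 using hscale
  set EE : Finset (Sym2 s) := (Finset.range (l + 1)).biUnion E with hEE
  set H : SimpleGraph s := SimpleGraph.fromEdgeSet (EE : Set (Sym2 s)) with hH
  have hHsub : H.edgeSet.toFinite.toFinset ⊆ EE := by
    intro e he
    have : e ∈ H.edgeSet := by simpa using he
    rw [hH, SimpleGraph.edgeSet_fromEdgeSet] at this
    exact_mod_cast this.1
  have hEcard : ∀ i, ((E i).card : ℝ) ≤ 16 * K * lg * ((N i \ N (i + k)).card : ℝ) := by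
    intro i
    refine (hE1 i).trans ?_
    have : 4 * K * ((N i \ N (i + k)).card : ℝ) * (1 + 2 * lg) ≤
      4 * K * ((N i \ N (i + k)).card : ℝ) * (4 * lg) := by gcongr
    linarith
  refine ⟨H, ?_, ?_, ?_⟩
  · -- spanner
    have hedge : ∀ i ≤ l, ∀ x y : s, (s(x, y) ∈ E i ∨ x = y) →
        ∃ p : H.Walk x y, walkWeight p ≤ 12 * t * 2 ^ i := by
      intro i hi x y h
      by_cases hxy : x = y
      · subst hxy
        refine ⟨SimpleGraph.Walk.nil, ?_⟩
        simp only [walkWeight, SimpleGraph.Walk.edges_nil, List.map_nil, List.sum_nil]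
        positivity
      · have h := h.resolve_right hxy
        have hadj : H.Adj x y := by
          rw [hH, SimpleGraph.fromEdgeSet_adj]
          refine ⟨?_, hxy⟩
          rw [Finset.mem_coe, hEE]
          exact Finset.mem_biUnion.2 ⟨i, Finset.mem_range.2 (by omega), h⟩
        refine ⟨hadj.toWalk, ?_⟩
        have := hE2 i _ h
        simp only [walkWeight, SimpleGraph.Adj.toWalk, SimpleGraph.Walk.edges_cons,
          SimpleGraph.Walk.edges_nil, List.map_cons, List.map_nil, List.sum_cons, List.sum_nil]
        linarith
    have hstep : ∀ i ≤ l, ∀ x ∈ N i, ∀ y ∈ N i, dist x y ≤ 6 * 2 ^ i →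
        ∃ p : H.Walk x y, walkWeight p ≤ 24 * t * 2 ^ i := by
      intro i hi x hx y hy hxy
      obtain ⟨a, h1, h2⟩ := hE3 i x hx y hy hxy
      obtain ⟨p, hp⟩ := hedge i hi x a h1
      obtain ⟨q, hq⟩ := hedge i hi a y h2
      refine ⟨p.append q, ?_⟩
      rw [walkWeight_append']
      linarith
    have hclimb : ∀ i ≤ l, ∀ x : s, ∃ y ∈ N i, dist x y ≤ 2 * 2 ^ i ∧
        (∃ p : H.Walk x y, walkWeight p ≤ 24 * t * 2 ^ i) ∧
        (∃ p : H.Walk y x, walkWeight p ≤ 24 * t * 2 ^ i) := by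
      intro i
      induction i with
      | zero =>
        intro _ x
        refine ⟨x, by rw [hN0]; simp, by simp, ⟨SimpleGraph.Walk.nil, ?_⟩,
          ⟨SimpleGraph.Walk.nil, ?_⟩⟩ <;>
        · simp only [walkWeight, SimpleGraph.Walk.edges_nil, List.map_nil, List.sum_nil]
          positivity
      | succ i ih =>
        intro hi x
        obtain ⟨y, hy, hxy, ⟨p, hp⟩, ⟨p', hp'⟩⟩ := ih (by omega) x
        obtain ⟨z, hz, hyz⟩ := hNcov i y hy
        have h2 : (0 : ℝ) < 2 ^ i := by positivity
        have hyz' : dist y z ≤ 6 * 2 ^ i := by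
          rw [pow_succ] at hyz; linarith
        obtain ⟨q, hq⟩ := hstep i (by omega) y hy z (hNsub i hz) hyz'
        obtain ⟨q', hq'⟩ := hstep i (by omega) z (hNsub i hz) y hy (by rwa [dist_comm])
        refine ⟨z, hz, ?_, ⟨p.append q, ?_⟩, ⟨q'.append p', ?_⟩⟩
        · have := dist_triangle x y z
          rw [pow_succ] at hyz ⊢
          linarith
        · rw [walkWeight_append', pow_succ]; linarith
        · rw [walkWeight_append', pow_succ]; linarith
    apply isSpanner_of
    intro u v
    by_cases huv : u = v
    · subst huv
      refine ⟨SimpleGraph.Walk.nil, ?_⟩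
      simp [walkWeight]
    obtain ⟨i, hi1, hi2⟩ := exists_nat_pow_near (hX u v huv) (one_lt_two)
    have hil : i ≤ l := by
      by_contra hcon
      push Not at hcon
      have : (2 : ℝ) ^ (l + 1) ≤ 2 ^ i := pow_le_pow_right₀ (by norm_num) hcon
      have := hMle u v
      linarith
    obtain ⟨u', hu', huu, ⟨p, hp⟩, -⟩ := hclimb i hil u
    obtain ⟨v', hv', hvv, -, ⟨q, hq⟩⟩ := hclimb i hil v
    have hd : dist u' v' ≤ 6 * 2 ^ i := by
      have := dist_triangle4 u' u v v'
      rw [dist_comm u' u] at this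
      rw [pow_succ] at hi2
      linarith
    obtain ⟨w, hw⟩ := hstep i hil u' hu' v' hv' hd
    refine ⟨(p.append w).append q, ?_⟩
    rw [walkWeight_append', walkWeight_append']
    have : t * 2 ^ i ≤ t * dist u v := by gcongr
    have : 0 ≤ t * dist u v := by positivity
    linarith
  · -- weight
    have hNW : ∀ i ≤ l, 2 ^ i * ((N i).card : ℝ) ≤ 2 * W := by
      intro i hi
      by_cases h2 : 2 ≤ (N i).card
      · exact net_le_mst _ (by positivity) _ (hNsep i) h2
      · have h1 : ((N i).card : ℝ) ≤ 1 := by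
          have : (N i).card ≤ 1 := by omega
          exact_mod_cast this
        have h3 : (2 : ℝ) ^ i ≤ 2 ^ l := pow_le_pow_right₀ (by norm_num) hi
        have h4 : (2 : ℝ) ^ i * ((N i).card : ℝ) ≤ 2 ^ i * 1 := by gcongr
        linarith
    have hsumN : ∑ i ∈ Finset.range (l + 1), 2 ^ i * ((N i).card : ℝ) ≤ (2 * m + 2) * W := by
      apply sum_weight _ l m W hW0 hNW
      intro i hi
      have e : (2 : ℝ) ^ i * ((N i).card : ℝ) * 2 ^ (l - i) = 2 ^ l * (N i).card := by
        have : (2 : ℝ) ^ l = 2 ^ i * 2 ^ (l - i) := by rw [← pow_add]; congr 1; omega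
        rw [this]; ring
      rw [e]
      have h1 : ((N i).card : ℝ) ≤ n := by
        have : (N i).card ≤ n := by simpa using Finset.card_le_univ (N i)
        exact_mod_cast this
      apply mul_le_mul (hl1.trans hMW) (h1.trans hm1) (by positivity) hW0
    calc graphWeight H ≤ ∑ e ∈ EE, symDist e :=
          Finset.sum_le_sum_of_subset_of_nonneg hHsub fun e _ _ => symDist_nonneg' e
      _ ≤ ∑ i ∈ Finset.range (l + 1), ∑ e ∈ E i, symDist e := by
          rw [hEE]
          exact sum_biUnion_le' _ _ _ symDist_nonneg'
      _ ≤ ∑ i ∈ Finset.range (l + 1), 192 * t * K * lg * (2 ^ i * ((N i).card : ℝ)) := by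
          apply Finset.sum_le_sum
          intro i _
          calc ∑ e ∈ E i, symDist e ≤ (E i).card • (2 * (t * (6 * 2 ^ i))) :=
                Finset.sum_le_card_nsmul _ _ _ (hE2 i)
            _ = (E i).card * (12 * t * 2 ^ i) := by rw [nsmul_eq_mul]; ring
            _ ≤ (16 * K * lg * (N i).card) * (12 * t * 2 ^ i) := by
                apply mul_le_mul_of_nonneg_right _ (by positivity)
                refine (hEcard i).trans ?_
                apply mul_le_mul_of_nonneg_left _ (by positivity)
                exact_mod_cast Finset.card_le_card Finset.sdiff_subset
            _ = _ := by ring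
      _ = 192 * t * K * lg * ∑ i ∈ Finset.range (l + 1), (2 ^ i * ((N i).card : ℝ)) := by
          rw [Finset.mul_sum]
      _ ≤ 192 * t * K * lg * ((9 * lg) * W) := by
          apply mul_le_mul_of_nonneg_left _ (by positivity)
          refine hsumN.trans ?_
          gcongr
      _ = _ := by ring
  · have h1 : edgeCount H ≤ EE.card := by
      unfold edgeCount
      rw [Nat.card_coe_set_eq, Set.ncard_eq_toFinset_card _ H.edgeSet.toFinite]
      exact Finset.card_le_card hHsub
    calc (edgeCount H : ℝ) ≤ EE.card := by exact_mod_cast h1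
      _ ≤ ((∑ i ∈ Finset.range (l + 1), (E i).card : ℕ) : ℝ) :=
          Nat.cast_le.2 Finset.card_biUnion_le
      _ = ∑ i ∈ Finset.range (l + 1), ((E i).card : ℝ) := by push_cast; rfl
      _ ≤ ∑ i ∈ Finset.range (l + 1), 16 * K * lg * ((N i \ N (i + k)).card : ℝ) :=
          Finset.sum_le_sum fun i _ => hEcard i
      _ = 16 * K * lg * ∑ i ∈ Finset.range (l + 1), ((N i \ N (i + k)).card : ℝ) := by
          rw [Finset.mul_sum]
      _ ≤ 16 * K * lg * (k * n) := by
          apply mul_le_mul_of_nonneg_left _ (by positivity)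
          simpa using sum_tele N hNsub k (l + 1)
      _ ≤ 16 * K * lg * (9 * Real.log t * n) := by gcongr
      _ ≤ _ := by
          have : 0 ≤ K * lg * (Real.log t * n) := by positivity
          linarith

/-- For every set of `n` points in `ℝ^d` with minimum pairwise distance
`1`, every `ε ∈ (0, 1/8)` and every `2 ≤ t ≤ √(2d/ln d)`, there is an `O(t)`-spanner with
lightness `O_ε(t·2^{O(d/t²)}·log² n)` and `O_ε(n·2^{O(d/t²)}·log n·log t)` edges. -/
theorem euclidean_low_dim_light_spanner :
    ∃ (C : ℝ) (k : ℕ), 0 < C ∧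
      ∀ (d : ℕ) (s : Finset (EuclideanSpace ℝ (Fin d))) (ε t : ℝ),
        (∀ x ∈ s, ∀ y ∈ s, x ≠ y → 1 ≤ dist x y) →
        0 < ε → ε < 1 / 8 →
        2 ≤ t → t ≤ Real.sqrt (2 * d / Real.log d) →
        ∃ H : SimpleGraph ↥s,
          IsSpanner H (C * t) ∧
          graphWeight H ≤
            C * (1 / ε) ^ k * t * (2 : ℝ) ^ (C * d / t ^ 2) *
              Real.log s.card ^ 2 * mstWeight ↥s ∧
          (edgeCount H : ℝ) ≤
            C * (1 / ε) ^ k * (s.card : ℝ) * (2 : ℝ) ^ (C * d / t ^ 2) *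
              Real.log s.card * Real.log t := by
  refine ⟨1728, 0, by norm_num, ?_⟩
  intro d s ε t hs _ _ ht _
  have hK : (2 : ℝ) ^ ((d : ℝ) / t ^ 2) ≤ (2 : ℝ) ^ (1728 * (d : ℝ) / t ^ 2) := by
    apply Real.rpow_le_rpow_of_exponent_le (by norm_num)
    gcongr
    have : (0 : ℝ) ≤ d := by positivity
    linarith
  have hlg : 0 ≤ Real.log s.card := Real.log_natCast_nonneg _
  have hlt : 0 ≤ Real.log t := Real.log_nonneg (by linarith)
  by_cases hn : 2 ≤ s.card
  · obtain ⟨H, h1, h2, h3⟩ := main_lemma s t hs ht hn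
    have hW : 0 ≤ mstWeight ↥s := by
      obtain ⟨x, hx⟩ := Finset.card_pos.1 (by omega : 0 < s.card)
      have := dist_le_mst (⟨x, hx⟩ : s) ⟨x, hx⟩
      rwa [dist_self] at this
    refine ⟨H, h1, h2.trans ?_, h3.trans ?_⟩
    · rw [pow_zero, mul_one]
      gcongr
    · rw [pow_zero, mul_one]
      gcongr
  · have h01 : s.card = 0 ∨ s.card = 1 := by omega
    have hlog : Real.log s.card = 0 := by rcases h01 with h | h <;> simp [h]
    have hsub : Subsingleton s := by
      have : Fintype.card s ≤ 1 := by simpa using (by omega : s.card ≤ 1)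
      exact Fintype.card_le_one_iff_subsingleton.1 this
    refine ⟨⊥, ?_, ?_, ?_⟩
    · apply isSpanner_of
      intro u v
      obtain rfl := Subsingleton.elim u v
      exact ⟨SimpleGraph.Walk.nil, by simp [walkWeight]⟩
    · rw [hlog]
      simp [graphWeight]
    · rw [hlog]
      simp [edgeCount]
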